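/- arXiv:1907.04430 — 2 statements merged into one kernel-verified Lean document; each statement's English description precedes it below -/
import Mathlib

section
/- Let F be the free group on the basis S = {e₀, e₁, e₂, e₃} and let Φ be the automorphism of F with Φ(e₀) = e₀, Φ(e₁) = e₁e₀, Φ(e₂) = e₂e₀, Φ(e₃) = e₃e₀e₁e₂⁻¹. Then for every n ≥ 1 the word lengths of the images of the generators are ‖Φⁿ(e₀)‖ = 1, ‖Φⁿ(e₁)‖ = ‖Φⁿ(e₂)‖ = n+1, and ‖Φⁿ(e₃)‖ = 3n+1; consequently the growth function satisfies GR_{Φ,S}(n) = 3n+1 for all n ≥ 1, so Φ has linear growth. -/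
/-- The word length of an element of a free group with respect to the free
basis: the length of the reduced word representing it. -/
noncomputable def wordLength {S : Type*} [DecidableEq S] (w : FreeGroup S) : ℕ :=
  w.toWord.length

/-!
Since `Φ` appends `e₀` to both `e₁` and `e₂`, it fixes `e₁e₂⁻¹`, hence also `u = e₀e₁e₂⁻¹`. If
`Φ(g) = gv` and `Φ(v) = v`, then `Φⁿ(g) = gvⁿ`; this applies with `v = e₀` to `e₁` and `e₂`, and
with `v = u` to `e₃`. No cancellation occurs in `gvⁿ`, because in each case the word `gv` is
reduced and `v` is cyclically reduced.
-/

section MulDistribMulAction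

lemma pow_smul_eq_mul_pow {A M : Type*} [Monoid A] [Monoid M] [MulDistribMulAction A M]
    {a : A} {g u : M} (hg : a • g = g * u) (hu : a • u = u) (n : ℕ) :
    a ^ n • g = g * u ^ n := by
  induction n with
  | zero => rw [pow_zero, pow_zero, one_smul, mul_one]
  | succ n ih =>
    calc a ^ (n + 1) • g = a • (g * u ^ n) := by rw [pow_succ', mul_smul, ih]
      _ = g * u * u ^ n := by rw [smul_mul', smul_pow', hg, hu]
      _ = g * u ^ (n + 1) := by rw [mul_assoc, pow_succ']

lemma smul_mul_inv_eq_self {A G : Type*} [Monoid A] [Group G] [MulDistribMulAction A G]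
    {a : A} {x y t : G} (hx : a • x = x * t) (hy : a • y = y * t) :
    a • (x * y⁻¹) = x * y⁻¹ := by
  rw [smul_mul', smul_inv', hx, hy, mul_inv_rev, mul_assoc, mul_inv_cancel_left]

end MulDistribMulAction

section WordLength

open FreeGroup

lemma isReduced_append_flatten_replicate {S : Type*} {L U : List (S × Bool)}
    (hLU : IsReduced (L ++ U)) (hU : IsCyclicallyReduced U) (n : ℕ) :
    IsReduced (L ++ (List.replicate n U).flatten) := by
  rcases eq_or_ne n 0 with rfl | hn
  · simpa using hLU.infix (List.prefix_append L U).isInfix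
  · simpa using IsReduced.append_flatten_replicate_append (L₃ := []) hU (by simpa using hLU) hn

variable {S : Type*} [DecidableEq S]

lemma wordLength_mk {L : List (S × Bool)} (hL : IsReduced L) :
    wordLength (mk L) = L.length := by
  rw [wordLength, toWord_mk, hL.reduce_eq]

lemma wordLength_mk_mul_mk_pow {L U : List (S × Bool)} (hLU : IsReduced (L ++ U))
    (hU : IsCyclicallyReduced U) (n : ℕ) :
    wordLength (mk L * mk U ^ n) = L.length + n * U.length := by
  rw [pow_mk, mul_mk, wordLength_mk (isReduced_append_flatten_replicate hLU hU n)]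
  simp

lemma wordLength_of_mul_of_pow (i j : S) (n : ℕ) :
    wordLength (of i * of j ^ n) = n + 1 := by
  have hij : IsReduced ([(i, true)] ++ [(j, true)]) := by simp
  have hj : IsCyclicallyReduced [(j, true)] := .singleton
  calc wordLength (of i * of j ^ n) = 1 + n * 1 := wordLength_mk_mul_mk_pow hij hj n
    _ = n + 1 := by ring

lemma wordLength_of_mul_of_mul_of_mul_inv_pow {j k l : S} (hjl : j ≠ l) (hkl : k ≠ l)
    (i : S) (n : ℕ) :
    wordLength (of i * (of j * (of k * (of l)⁻¹)) ^ n) = 3 * n + 1 := by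
  have hU : IsCyclicallyReduced [(j, true), (k, true), (l, false)] := by
    simp [isCyclicallyReduced_iff, hjl.symm, hkl]
  have hiU : IsReduced ([(i, true)] ++ [(j, true), (k, true), (l, false)]) := by simp [hkl]
  calc wordLength (of i * (of j * (of k * (of l)⁻¹)) ^ n) = 1 + n * 3 :=
        wordLength_mk_mul_mk_pow hiU hU n
    _ = 3 * n + 1 := by ring

end WordLength

/-- Let `Φ` be the automorphism of the free group on `S = {e₀, e₁, e₂, e₃}`
with `Φ(e₀) = e₀`, `Φ(e₁) = e₁e₀`, `Φ(e₂) = e₂e₀`, `Φ(e₃) = e₃e₀e₁e₂⁻¹`.  For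
`n ≥ 1`, `‖Φⁿ(e₀)‖ = 1`, `‖Φⁿ(e₁)‖ = ‖Φⁿ(e₂)‖ = n+1`, `‖Φⁿ(e₃)‖ = 3n+1`;
consequently `GR_{Φ,S}(n) = max_{s ∈ S} ‖Φⁿ(s)‖ = 3n+1`, so `Φ` has linear
growth. -/
theorem phi_linear_growth (Φ : MulAut (FreeGroup (Fin 4)))
    (e : Fin 4 → FreeGroup (Fin 4)) (he : e = fun i => FreeGroup.of i)
    (h0 : Φ (e 0) = e 0) (h1 : Φ (e 1) = e 1 * e 0) (h2 : Φ (e 2) = e 2 * e 0)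
    (h3 : Φ (e 3) = e 3 * e 0 * e 1 * (e 2)⁻¹) :
    ∀ n : ℕ, 1 ≤ n →
      wordLength ((Φ ^ n) (e 0)) = 1 ∧
      wordLength ((Φ ^ n) (e 1)) = n + 1 ∧
      wordLength ((Φ ^ n) (e 2)) = n + 1 ∧
      wordLength ((Φ ^ n) (e 3)) = 3 * n + 1 ∧
      (Finset.univ.sup fun i : Fin 4 => wordLength ((Φ ^ n) (FreeGroup.of i)))
        = 3 * n + 1 := by
  subst he
  simp only [← MulAut.smul_def] at h0 h1 h2 h3 ⊢
  intro n _
  set u : FreeGroup (Fin 4) := .of 0 * (.of 1 * (.of 2)⁻¹) with u_def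
  have hu : Φ • u = u := by rw [u_def, smul_mul', h0, smul_mul_inv_eq_self h1 h2]
  have h3u : Φ • FreeGroup.of (3 : Fin 4) = FreeGroup.of 3 * u := by
    rw [h3, u_def, mul_assoc, mul_assoc]
  have len0 : wordLength (Φ ^ n • FreeGroup.of (0 : Fin 4)) = 1 := by
    rw [pow_mem (MulAction.mem_stabilizer_iff.2 h0) n]
    exact wordLength_mk .singleton
  have len1 : wordLength (Φ ^ n • FreeGroup.of (1 : Fin 4)) = n + 1 := by
    rw [pow_smul_eq_mul_pow h1 h0, wordLength_of_mul_of_pow]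
  have len2 : wordLength (Φ ^ n • FreeGroup.of (2 : Fin 4)) = n + 1 := by
    rw [pow_smul_eq_mul_pow h2 h0, wordLength_of_mul_of_pow]
  have len3 : wordLength (Φ ^ n • FreeGroup.of (3 : Fin 4)) = 3 * n + 1 := by
    rw [pow_smul_eq_mul_pow h3u hu, u_def,
      wordLength_of_mul_of_mul_of_mul_inv_pow (by decide) (by decide)]
  have max3 : IsMaxOn (fun i : Fin 4 => wordLength (Φ ^ n • FreeGroup.of i))
      ↑(Finset.univ : Finset (Fin 4)) 3 := by
    rw [Finset.coe_univ, isMaxOn_univ_iff]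
    intro i
    fin_cases i <;> grind
  exact ⟨len0, len1, len2, len3, (sup_eq_of_isMaxOn (Finset.mem_univ 3) max3).trans len3⟩
end

section
/- Let F be the free group on e₀, e₁, e₂, e₃, let Φ be the automorphism of F with Φ(e₀) = e₀, Φ(e₁) = e₁e₀, Φ(e₂) = e₂e₀, Φ(e₃) = e₃e₀e₁e₂⁻¹, and let G = F ⋊_Φ ℤ with stable letter t = (1, 1). Then the subgroup of G generated by t and (e₀, 0), and the subgroup of G generated by t and (e₀e₁e₂⁻¹, 0), are each free abelian of rank 2. -/
/-!
Both `e₀` and `e₀e₁e₂⁻¹` are fixed by `Φ`: in the second word the factors `e₀` and `e₀⁻¹` coming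
from `e₁` and `e₂⁻¹` cancel. Hence each commutes with `t`. Being nontrivial in the torsion-free
group `F`, each has infinite order, and its powers lie in the kernel `F` of the projection
`F ⋊_Φ ℤ → ℤ`, which is injective on the powers of `t`. Two commuting elements of infinite order
whose cyclic subgroups meet trivially generate `ℤ × ℤ`.
-/

/-- The mapping torus `F ⋊_Φ ℤ` of an automorphism `Φ` of `F`: the semidirect
product of `F` by `ℤ` where `ℤ` acts by `n ↦ Φⁿ`. -/
abbrev MappingTorus (F : Type*) [Group F] (Φ : MulAut F) :=
  F ⋊[zpowersHom (MulAut F) Φ] Multiplicative ℤ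

theorem nonempty_closure_pair_mulEquiv_of_commute {G : Type*} [Group G] {x y : G}
    (hxy : Commute x y) (hx : ¬IsOfFinOrder x) (hy : ¬IsOfFinOrder y)
    (hdisj : Disjoint (Subgroup.zpowers x) (Subgroup.zpowers y)) :
    Nonempty (Subgroup.closure {x, y} ≃* Multiplicative (ℤ × ℤ)) := by
  let f : Multiplicative ℤ × Multiplicative ℤ →* G :=
    (zpowersHom G x).noncommCoprod (zpowersHom G y) fun m n =>
      hxy.zpow_zpow m.toAdd n.toAdd
  have hinj : Function.Injective f :=
    (MonoidHom.noncommCoprod_injective ..).2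
      ⟨injective_zpow_iff_not_isOfFinOrder.2 hx, injective_zpow_iff_not_isOfFinOrder.2 hy, hdisj⟩
  have hrange : f.range = Subgroup.closure {x, y} := by
    refine (MonoidHom.noncommCoprod_range ..).trans ?_
    rw [Subgroup.range_zpowersHom, Subgroup.range_zpowersHom, Subgroup.zpowers_eq_closure,
      Subgroup.zpowers_eq_closure, ← Subgroup.closure_union, Set.singleton_union]
  exact ⟨(MulEquiv.subgroupCongr hrange).symm.trans <|
    (MonoidHom.ofInjective hinj).symm.trans (MulEquiv.prodMultiplicative ℤ ℤ).symm⟩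

section SemidirectProduct

open SemidirectProduct

variable {N G : Type*} [Group N] [Group G] {φ : G →* MulAut N}

theorem commute_inr_inl_iff {g : G} {n : N} :
    Commute (inr g : N ⋊[φ] G) (inl n) ↔ φ g n = n := by
  rw [← inl_inj (φ := φ), inl_aut, map_inv, mul_inv_eq_iff_eq_mul]
  rfl

theorem disjoint_range_inr_range_inl :
    Disjoint (inr : G →* N ⋊[φ] G).range (inl : N →* N ⋊[φ] G).range := by
  rw [range_inl_eq_ker_rightHom, Subgroup.disjoint_def]
  rintro _ ⟨g, rfl⟩ hg
  rw [MonoidHom.mem_ker, rightHom_inr] at hg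
  rw [hg, map_one]

theorem nonempty_closure_inr_inl_mulEquiv_of_fixed {g : G} {n : N} (hfix : φ g n = n)
    (hg : ¬IsOfFinOrder g) (hn : ¬IsOfFinOrder n) :
    Nonempty (Subgroup.closure {(inr g : N ⋊[φ] G), inl n} ≃* Multiplicative (ℤ × ℤ)) :=
  nonempty_closure_pair_mulEquiv_of_commute (commute_inr_inl_iff.2 hfix)
    (inr_injective.isOfFinOrder_iff.not.2 hg) (inl_injective.isOfFinOrder_iff.not.2 hn)
    (disjoint_range_inr_range_inl.mono (Subgroup.zpowers_le.2 (MonoidHom.mem_range.2 ⟨g, rfl⟩))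
      (Subgroup.zpowers_le.2 (MonoidHom.mem_range.2 ⟨n, rfl⟩)))

end SemidirectProduct

theorem nonempty_closure_stableLetter_mulEquiv_of_fixed {F : Type*} [Group F] {Φ : MulAut F} {g : F}
    (hfix : Φ g = g) (hg : ¬IsOfFinOrder g) :
    Nonempty (Subgroup.closure {(⟨1, Multiplicative.ofAdd 1⟩ : MappingTorus F Φ), ⟨g, 1⟩} ≃*
      Multiplicative (ℤ × ℤ)) :=
  nonempty_closure_inr_inl_mulEquiv_of_fixed (by simpa using hfix)
    (not_isOfFinOrder_of_isMulTorsionFree (by simp)) hg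

theorem map_mul_mul_inv_eq_self {F : Type*} [Group F] {Φ : F →* F} {a b c d : F}
    (ha : Φ a = a) (hb : Φ b = b * d) (hc : Φ c = c * d) :
    Φ (a * b * c⁻¹) = a * b * c⁻¹ := by
  rw [map_mul, map_mul, map_inv, ha, hb, hc]
  group

theorem of_mul_of_mul_inv_of_ne_one {α : Type*} (i j k : α) :
    FreeGroup.of i * FreeGroup.of j * (FreeGroup.of k)⁻¹ ≠ 1 := by
  intro h
  -- The total exponent sum of the word is `1`.
  simpa using congrArg (FreeGroup.lift fun _ : α => Multiplicative.ofAdd (1 : ℤ)) h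

theorem tori_subgroups_free_abelian_general {α : Type*} {Φ : MulAut (FreeGroup α)} {i j k : α}
    (hi : Φ (FreeGroup.of i) = FreeGroup.of i)
    (hj : Φ (FreeGroup.of j) = FreeGroup.of j * FreeGroup.of i)
    (hk : Φ (FreeGroup.of k) = FreeGroup.of k * FreeGroup.of i) :
    Nonempty (Subgroup.closure
        {(⟨1, Multiplicative.ofAdd 1⟩ : MappingTorus (FreeGroup α) Φ), ⟨FreeGroup.of i, 1⟩} ≃*
      Multiplicative (ℤ × ℤ)) ∧
    Nonempty (Subgroup.closure
        {(⟨1, Multiplicative.ofAdd 1⟩ : MappingTorus (FreeGroup α) Φ),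
          ⟨FreeGroup.of i * FreeGroup.of j * (FreeGroup.of k)⁻¹, 1⟩} ≃*
      Multiplicative (ℤ × ℤ)) :=
  ⟨nonempty_closure_stableLetter_mulEquiv_of_fixed hi
      (not_isOfFinOrder_of_isMulTorsionFree (FreeGroup.of_ne_one i)),
    nonempty_closure_stableLetter_mulEquiv_of_fixed
      (map_mul_mul_inv_eq_self (Φ := Φ.toMonoidHom) hi hj hk)
      (not_isOfFinOrder_of_isMulTorsionFree (of_mul_of_mul_inv_of_ne_one i j k))⟩

/-- Let `Φ` be the automorphism of the free group `F` on `e₀, e₁, e₂, e₃` with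
`Φ(e₀) = e₀`, `Φ(e₁) = e₁e₀`, `Φ(e₂) = e₂e₀`, `Φ(e₃) = e₃e₀e₁e₂⁻¹`, and let
`G = F ⋊_Φ ℤ` with stable letter `t = (1, 1)`.  Then the subgroup generated by
`t` and `(e₀, 0)`, and the subgroup generated by `t` and `(e₀e₁e₂⁻¹, 0)`, are
each free abelian of rank `2` (i.e. isomorphic to `ℤ × ℤ`). -/
theorem tori_subgroups_free_abelian (Φ : MulAut (FreeGroup (Fin 4)))
    (e : Fin 4 → FreeGroup (Fin 4)) (he : e = fun i => FreeGroup.of i)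
    (h0 : Φ (e 0) = e 0) (h1 : Φ (e 1) = e 1 * e 0) (h2 : Φ (e 2) = e 2 * e 0)
    (h3 : Φ (e 3) = e 3 * e 0 * e 1 * (e 2)⁻¹) :
    Nonempty ((Subgroup.closure
        {(⟨1, Multiplicative.ofAdd 1⟩ : MappingTorus (FreeGroup (Fin 4)) Φ),
          ⟨e 0, 1⟩}) ≃* Multiplicative (ℤ × ℤ)) ∧
    Nonempty ((Subgroup.closure
        {(⟨1, Multiplicative.ofAdd 1⟩ : MappingTorus (FreeGroup (Fin 4)) Φ),
          ⟨e 0 * e 1 * (e 2)⁻¹, 1⟩}) ≃* Multiplicative (ℤ × ℤ)) := by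
  subst he
  exact tori_subgroups_free_abelian_general h0 h1 h2
end
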